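/- Let P be a Poisson algebra over a field k, E a vector space, and π : E → P a surjective Poisson algebra morphism (for some Poisson algebra structure on E) admitting a section s : P → E that is a morphism of Poisson algebras. Then there exists a semi-direct system (⇀, ◁, ▷) of P by V := Ker(π) and an isomorphism of Poisson algebras E ≅ P ⋊ V, where P ⋊ V is the semidirect product: the vector space P×V with multiplication (p,x)⋆(q,y) = (pq, p⇀y + x◁q + x·_V y) and bracket {(p,x),(q,y)} = ([p,q], p▷y − q▷x + [x,y]_V), and (·_V, [-,-]_V) is the Poisson algebra structure of V as a Poisson subalgebra of E. -/

import Mathlib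

/-! The kernel `V = ker π` is a two-sided ideal for both operations of `E`, so `P` acts on it through
the section: `p ⇀ x = s(p)x`, `x ◁ p = x s(p)`, `p ▷ x = [s(p), x]`. As `s` splits `π`, the map
`φ(p, x) = s(p) + x` is a linear isomorphism `P × V ≃ E`, and since `s` is a Poisson morphism,
expanding `(s(p) + x)(s(q) + y)` and `[s(p) + x, s(q) + y]` shows that `φ` carries the semidirect
operations to those of `E`. The Poisson axioms for `P ⋊ V` therefore need no separate computation:
they are pulled back from `E` along the injective map `φ` (`IsPoisson.of_injective`). -/

universe u

section Defs

variable (k : Type u) [Field k]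

/-- A map in two variables is `k`-bilinear. -/
def IsBilin {A B C : Type u} [AddCommGroup A] [Module k A] [AddCommGroup B] [Module k B]
    [AddCommGroup C] [Module k C] (f : A → B → C) : Prop :=
  (∀ a a' b, f (a + a') b = f a b + f a' b) ∧
  (∀ (c : k) (a b), f (c • a) b = c • f a b) ∧
  (∀ a b b', f a (b + b') = f a b + f a b') ∧
  (∀ (c : k) (a b), f a (c • b) = c • f a b)

/-- `(A, mul, br)` is a (not necessarily commutative or unital) Poisson algebra over `k`:
`mul` is a bilinear associative multiplication, `br` is a Lie bracket and the
Leibniz law `[ab, c] = [a,c]b + a[b,c]` holds. -/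
structure IsPoisson {A : Type u} [AddCommGroup A] [Module k A]
    (mul br : A → A → A) : Prop where
  mul_bilin : IsBilin k mul
  br_bilin : IsBilin k br
  mul_assoc : ∀ a b c, mul (mul a b) c = mul a (mul b c)
  br_alt : ∀ a, br a a = 0
  jacobi : ∀ a b c, br (br a b) c + br (br b c) a + br (br c a) b = 0
  leibniz : ∀ a b c, br (mul a b) c = mul (br a c) b + mul a (br b c)

variable (P V : Type u) [AddCommGroup P] [Module k P] [AddCommGroup V] [Module k V]

/-- A pre-crossed datum `Ω(P,V) = (⇀, ◁, ϑ, ·_V, ▷, f, [-,-]_V)` of a Poisson algebra `P`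
by a vector space `V`:  seven bilinear maps.  Here `hl = ⇀`, `hr = ◁`, `theta = ϑ`,
`mulV = ·_V`, `lact = ▷`, `cf = f` and `brV = [-,-]_V`. -/
structure PreCrossedDatum where
  hl : P → V → V
  hr : V → P → V
  theta : P → P → V
  mulV : V → V → V
  lact : P → V → V
  cf : P → P → V
  brV : V → V → V
  hl_bilin : IsBilin k hl
  hr_bilin : IsBilin k hr
  theta_bilin : IsBilin k theta
  mulV_bilin : IsBilin k mulV
  lact_bilin : IsBilin k lact
  cf_bilin : IsBilin k cf
  brV_bilin : IsBilin k brV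

variable {k P V}

/-- The multiplication `(p,x) ⋆ (q,y) = (pq, ϑ(p,q) + p⇀y + x◁q + x·y)` of `P ♯ V`. -/
def sharpMul (mulP : P → P → P) (Om : PreCrossedDatum k P V) :
    P × V → P × V → P × V :=
  fun a b => (mulP a.1 b.1,
    Om.theta a.1 b.1 + Om.hl a.1 b.2 + Om.hr a.2 b.1 + Om.mulV a.2 b.2)

/-- The bracket `{(p,x), (q,y)} = ([p,q], f(p,q) + p▷y − q▷x + [x,y]_V)` of `P ♯ V`. -/
def sharpBr (brP : P → P → P) (Om : PreCrossedDatum k P V) :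
    P × V → P × V → P × V :=
  fun a b => (brP a.1 b.1,
    Om.cf a.1 b.1 + Om.lact a.1 b.2 - Om.lact b.1 a.2 + Om.brV a.2 b.2)

/-- A pre-crossed datum is a crossed system when `P ♯ V` is a Poisson algebra. -/
def IsCrossedSystem (mulP brP : P → P → P) (Om : PreCrossedDatum k P V) : Prop :=
  IsPoisson k (sharpMul mulP Om) (sharpBr brP Om)

end Defs

/-- Bilinearity is inherited by any operation `g` that becomes a bilinear `f`, precomposed with
linear maps, after an injective linear map `r`. -/
lemma IsBilin.of_injective {k A B C A' B' C' : Type u} [Field k]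
    [AddCommGroup A] [Module k A] [AddCommGroup B] [Module k B] [AddCommGroup C] [Module k C]
    [AddCommGroup A'] [Module k A'] [AddCommGroup B'] [Module k B'] [AddCommGroup C'] [Module k C']
    {f : A → B → C} (hf : IsBilin k f) (i : A' →ₗ[k] A) (j : B' →ₗ[k] B) (r : C' →ₗ[k] C)
    (hr : Function.Injective r) {g : A' → B' → C'} (hg : ∀ a b, r (g a b) = f (i a) (j b)) :
    IsBilin k g := by
  obtain ⟨h1, h2, h3, h4⟩ := hf
  refine ⟨fun a a' b => hr ?_, fun c a b => hr ?_, fun a b b' => hr ?_, fun c a b => hr ?_⟩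
  · simp only [hg, map_add, h1]
  · simp only [hg, map_smul, h2]
  · simp only [hg, map_add, h3]
  · simp only [hg, map_smul, h4]

lemma IsPoisson.of_injective {k A B : Type u} [Field k] [AddCommGroup A] [Module k A]
    [AddCommGroup B] [Module k B] {mulB brB : B → B → B} (hB : IsPoisson k mulB brB)
    {mulA brA : A → A → A} (r : A →ₗ[k] B) (hr : Function.Injective r)
    (hmul : ∀ a b, r (mulA a b) = mulB (r a) (r b))
    (hbr : ∀ a b, r (brA a b) = brB (r a) (r b)) : IsPoisson k mulA brA where
  mul_bilin := hB.mul_bilin.of_injective r r r hr hmul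
  br_bilin := hB.br_bilin.of_injective r r r hr hbr
  mul_assoc a b c := hr (by simp only [hmul, hB.mul_assoc])
  br_alt a := hr (by simp only [hbr, hB.br_alt, map_zero])
  jacobi a b c := hr (by simp only [hbr, map_add, hB.jacobi, map_zero])
  leibniz a b c := hr (by simp only [hbr, hmul, map_add, hB.leibniz])

lemma IsBilin.zero_left {k A B C : Type u} [Field k] [AddCommGroup A] [Module k A]
    [AddCommGroup B] [Module k B] [AddCommGroup C] [Module k C] {f : A → B → C}
    (hf : IsBilin k f) (b : B) : f 0 b = 0 := by
  simpa using hf.2.1 0 0 b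

lemma IsBilin.zero_right {k A B C : Type u} [Field k] [AddCommGroup A] [Module k A]
    [AddCommGroup B] [Module k B] [AddCommGroup C] [Module k C] {f : A → B → C}
    (hf : IsBilin k f) (a : A) : f a 0 = 0 := by
  simpa using hf.2.2.2 0 a 0

lemma IsPoisson.br_skew {k A : Type u} [Field k] [AddCommGroup A] [Module k A]
    {mul br : A → A → A} (h : IsPoisson k mul br) (a b : A) : br a b = -br b a := by
  have hab := h.br_alt (a + b)
  rw [h.br_bilin.1, h.br_bilin.2.2.1, h.br_bilin.2.2.1, h.br_alt, h.br_alt, zero_add,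
    add_zero] at hab
  exact eq_neg_of_add_eq_zero_left hab

/-- **Example 2.7 (semidirect products describe split epimorphisms).**  If `π : E → P` is a
surjective Poisson algebra morphism admitting a section `s` that is a Poisson algebra
morphism, then there is a semi-direct system `(⇀, ◁, ▷)` of `P` by `V = ker π` (i.e. a
crossed system with trivial cocycles `ϑ = 0`, `f = 0`, whose Poisson structure on `V` is the
one inherited from `E`) and an isomorphism of Poisson algebras `E ≅ P ⋊ V`. -/
theorem statement6 {k P E : Type u} [Field k] [AddCommGroup P] [Module k P]
    [AddCommGroup E] [Module k E] (mulP brP : P → P → P) (hP : IsPoisson k mulP brP)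
    (mulE brE : E → E → E) (hE : IsPoisson k mulE brE)
    (π : E →ₗ[k] P) (hπ : Function.Surjective π)
    (hπmul : ∀ a b, π (mulE a b) = mulP (π a) (π b))
    (hπbr : ∀ a b, π (brE a b) = brP (π a) (π b))
    (s : P →ₗ[k] E) (hsec : ∀ p, π (s p) = p)
    (hsmul : ∀ p q, s (mulP p q) = mulE (s p) (s q))
    (hsbr : ∀ p q, s (brP p q) = brE (s p) (s q)) :
    ∃ Om : PreCrossedDatum k P ↥(LinearMap.ker π),
      -- the cocycles are trivial : `P ♯ V` is a semidirect product `P ⋊ V`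
      (∀ p q, Om.theta p q = 0) ∧ (∀ p q, Om.cf p q = 0) ∧
      -- the Poisson structure on `V = ker π` is the one inherited from `E`
      (∀ x y : ↥(LinearMap.ker π), (Om.mulV x y : E) = mulE (x : E) (y : E)) ∧
      (∀ x y : ↥(LinearMap.ker π), (Om.brV x y : E) = brE (x : E) (y : E)) ∧
      IsCrossedSystem mulP brP Om ∧
      ∃ φ : (P × ↥(LinearMap.ker π)) ≃ₗ[k] E,
        (∀ a b, φ (sharpMul mulP Om a b) = mulE (φ a) (φ b)) ∧
        (∀ a b, φ (sharpBr brP Om a b) = brE (φ a) (φ b)) := by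
  have mulL : ∀ a (x : LinearMap.ker π), mulE a x ∈ LinearMap.ker π := fun a x => by
    rw [LinearMap.mem_ker, hπmul, x.2, hP.mul_bilin.zero_right]
  have mulR : ∀ (x : LinearMap.ker π) a, mulE x a ∈ LinearMap.ker π := fun x a => by
    rw [LinearMap.mem_ker, hπmul, x.2, hP.mul_bilin.zero_left]
  have brL : ∀ a (x : LinearMap.ker π), brE a x ∈ LinearMap.ker π := fun a x => by
    rw [LinearMap.mem_ker, hπbr, x.2, hP.br_bilin.zero_right]
  let ι := (LinearMap.ker π).subtype
  have hι : Function.Injective ι := Subtype.val_injective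
  have hzero : IsBilin k (fun _ _ : P => (0 : LinearMap.ker π)) := by simp [IsBilin]
  let Om : PreCrossedDatum k P (LinearMap.ker π) :=
    { hl := fun p x => ⟨mulE (s p) x, mulL _ x⟩
      hr := fun x p => ⟨mulE x (s p), mulR x _⟩
      theta := fun _ _ => 0
      mulV := fun x y => ⟨mulE x y, mulL _ y⟩
      lact := fun p x => ⟨brE (s p) x, brL _ x⟩
      cf := fun _ _ => 0
      brV := fun x y => ⟨brE x y, brL _ y⟩
      hl_bilin := hE.mul_bilin.of_injective s ι ι hι fun _ _ => rfl
      hr_bilin := hE.mul_bilin.of_injective ι s ι hι fun _ _ => rfl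
      theta_bilin := hzero
      mulV_bilin := hE.mul_bilin.of_injective ι ι ι hι fun _ _ => rfl
      lact_bilin := hE.br_bilin.of_injective s ι ι hι fun _ _ => rfl
      cf_bilin := hzero
      brV_bilin := hE.br_bilin.of_injective ι ι ι hι fun _ _ => rfl }
  let φ : (P × LinearMap.ker π) ≃ₗ[k] E :=
    { LinearMap.coprod s ι with
      invFun := fun e => (π e, ⟨e - s (π e), by simp [hsec]⟩)
      left_inv := by
        rintro ⟨p, x, hx⟩
        have hx' : π x = 0 := hx
        ext <;> simp [ι, hsec, hx']
      right_inv := fun e => by simp [ι] }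
  have hφ : ∀ a, φ a = s a.1 + (a.2 : E) := fun _ => rfl
  have hφmul : ∀ a b, φ (sharpMul mulP Om a b) = mulE (φ a) (φ b) := by
    intro a b
    have : φ (sharpMul mulP Om a b) = s (mulP a.1 b.1) +
        (0 + mulE (s a.1) b.2 + mulE a.2 (s b.1) + mulE a.2 b.2) := rfl
    rw [this, hφ, hφ, hsmul, hE.mul_bilin.1, hE.mul_bilin.2.2.1, hE.mul_bilin.2.2.1]
    abel
  have hφbr : ∀ a b, φ (sharpBr brP Om a b) = brE (φ a) (φ b) := by
    intro a b
    have : φ (sharpBr brP Om a b) = s (brP a.1 b.1) +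
        (0 + brE (s a.1) b.2 - brE (s b.1) a.2 + brE a.2 b.2) := rfl
    rw [this, hφ, hφ, hsbr, hE.br_bilin.1, hE.br_bilin.2.2.1, hE.br_bilin.2.2.1,
      hE.br_skew (a.2 : E) (s b.1)]
    abel
  exact ⟨Om, fun _ _ => rfl, fun _ _ => rfl, fun _ _ => rfl, fun _ _ => rfl,
    hE.of_injective φ.toLinearMap φ.injective hφmul hφbr, φ, hφmul, hφbr⟩
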